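/- Let a, b : Fin n → EReal be row vectors with no +∞ entries such that Supp a ∩ Supp b = ∅ and Supp b ≠ ∅, let H := {h : Fin n → EReal | (∀ i, h i ≠ +∞) ∧ a·h ≥ b·h}, and let x : Fin n → EReal have no +∞ entry, with x ∉ H and d(x, H) < +∞ (equivalently a·x ≠ −∞). Then for h : Fin n → EReal with no +∞ entry, the following are equivalent: (1) h is a best approximation of x in H, i.e., h ∈ H and d(x, h) = d(x, H); (2) a·h ≥ b·h, b·h ≠ −∞, and for every k ∈ Fin n, x k + (a·h) + (−(b·x)) ≤ h k ≤ x k + (b·h) + (−(a·x)). -/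

import Mathlib

/-!
Write `A = a·x` and `B = b·x`; since `x ∉ H` is at finite distance from `H`, both are real and
`A < B`.  The theorem rests on the identity `d(x, H) = B - A`.

* Lower bound: for `h ∈ H` at finite distance from `x`, the residuals `l = x\h` and `m = h\x` are
  real, and `x + l ≤ h`, `h + m ≤ x` give the chain `B + l ≤ b·h ≤ a·h ≤ A - m`
  (`dotE_add_le`, `vres_spec`), so that `-(l + m) ≥ B - A`.
* The bound is attained by the vector equal to `x` on `Supp a` and to `x + (A - B)` elsewhere; this
  vector lies in `H` because the supports of `a` and `b` are disjoint (`exists_close_point`).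

If `h` is a best approximation, the chain above consists of equalities, so `l = a·h - B` and
`-m = b·h - A`, and `x + l ≤ h ≤ x - m` are the required inequalities. Conversely, those
inequalities bound `x\h` below by `a·h - B` and `h\x` below by `A - b·h`, whence `d(x, h) ≤ B - A`.
-/

/-- Max-plus pairing of a row vector with a column vector: `a·h = ⨆ i, a i + h i`. -/
noncomputable def dotE {n : ℕ} (a h : Fin n → EReal) : EReal := ⨆ i, (a i + h i)

/-- Support of a row vector: indices with entry `≠ -∞`. -/
def rSupp {n : ℕ} (a : Fin n → EReal) : Set (Fin n) := {i | a i ≠ ⊥}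

/-- Vector residuation `x\y` over `EReal`. -/
noncomputable def vres {n : ℕ} (x y : Fin n → EReal) : EReal :=
  sSup {l : EReal | ∀ i, x i + l ≤ y i}

/-- Hilbert's projective distance `d(x,y) = -((x\y) + (y\x))`. -/
noncomputable def dH {n : ℕ} (x y : Fin n → EReal) : EReal := -(vres x y + vres y x)

/-- Distance from a point to a set. -/
noncomputable def dSet {n : ℕ} (x : Fin n → EReal) (V : Set (Fin n → EReal)) : EReal :=
  ⨅ v ∈ V, dH x v

theorem dotE_ne_top {n : ℕ} {a x : Fin n → EReal} (ha : ∀ i, a i ≠ ⊤) (hx : ∀ i, x i ≠ ⊤) :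
    dotE a x ≠ ⊤ := by
  unfold dotE
  rw [← Finset.sup_univ_eq_iSup, ← lt_top_iff_ne_top, Finset.sup_lt_iff bot_lt_top]
  intro i _
  exact EReal.add_lt_top (ha i) (hx i)

theorem dotE_add_le {n : ℕ} (a : Fin n → EReal) {x y : Fin n → EReal} (l : ℝ)
    (hxy : ∀ i, x i + l ≤ y i) : dotE a x + l ≤ dotE a y := by
  rw [← EReal.le_sub_iff_add_le (Or.inl (EReal.coe_ne_bot l)) (Or.inl (EReal.coe_ne_top l))]
  refine iSup_le fun i => ?_
  rw [EReal.le_sub_iff_add_le (Or.inl (EReal.coe_ne_bot l)) (Or.inl (EReal.coe_ne_top l)),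
    add_assoc]
  exact (add_le_add le_rfl (hxy i)).trans (le_iSup (fun i => a i + y i) i)

/-- The supremum defining the residuation is attained. -/
theorem vres_spec {n : ℕ} {x y : Fin n → EReal} (hx : ∀ i, x i ≠ ⊤) (i : Fin n) :
    x i + vres x y ≤ y i := by
  by_cases hb : x i = ⊥
  · simp [hb]
  · rw [add_comm, ← EReal.le_sub_iff_add_le (Or.inl hb) (Or.inl (hx i))]
    refine sSup_le fun l hl => ?_
    rw [EReal.le_sub_iff_add_le (Or.inl hb) (Or.inl (hx i)), add_comm]
    exact hl i

theorem le_vres {n : ℕ} {x y : Fin n → EReal} {l : EReal} (hl : ∀ i, x i + l ≤ y i) :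
    l ≤ vres x y := le_sSup hl

/-- At finite distance from a vector `x` that is not identically `⊥`, both residuals are real. -/
theorem vres_real {n : ℕ} {x h : Fin n → EReal} (hx : ∀ i, x i ≠ ⊤) (hh : ∀ i, h i ≠ ⊤)
    {i : Fin n} (hi : x i ≠ ⊥) (hd : dH x h ≠ ⊤) :
    ∃ l m : ℝ, vres x h = l ∧ vres h x = m := by
  have hs : vres x h + vres h x ≠ ⊥ := by
    intro h0
    exact hd (by simp [dH, h0])
  rw [Ne, EReal.add_eq_bot_iff, not_or] at hs
  have h1 := vres_spec (y := h) hx i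
  have h2 := vres_spec (y := x) hh i
  have hp : vres x h ≠ ⊤ := by
    intro h0
    rw [h0, EReal.add_top_of_ne_bot hi, top_le_iff] at h1
    exact hh i h1
  have hhi : h i ≠ ⊥ := by
    intro h0
    rw [h0, le_bot_iff, EReal.add_eq_bot_iff] at h1
    exact h1.elim hi hs.1
  have hq : vres h x ≠ ⊤ := by
    intro h0
    rw [h0, EReal.add_top_of_ne_bot hhi, top_le_iff] at h2
    exact hx i h2
  exact ⟨_, _, (EReal.coe_toReal hp hs.1).symm, (EReal.coe_toReal hq hs.2).symm⟩

theorem exists_ne_bot {n : ℕ} {b x : Fin n → EReal} (hb : dotE b x ≠ ⊥) : ∃ i, x i ≠ ⊥ := by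
  by_contra! hc
  exact hb (by simp [dotE, hc])

/-- The distance from `x` to the half-space is at most `b·x - a·x`. -/
theorem exists_close_point {n : ℕ} {a b x : Fin n → EReal}
    (hdisj : rSupp a ∩ rSupp b = ∅) (hx : ∀ i, x i ≠ ⊤) {A B : ℝ}
    (hA : dotE a x = A) (hB : dotE b x = B) (hAB : A < B) :
    ∃ h : Fin n → EReal, ((∀ i, h i ≠ ⊤) ∧ dotE b h ≤ dotE a h) ∧
      dH x h ≤ ((B - A : ℝ) : EReal) := by
  classical
  have hneg : ((A - B : ℝ) : EReal) ≤ 0 := by exact_mod_cast (sub_neg.2 hAB).le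
  have hle : ∀ i, x i + ((A - B : ℝ) : EReal) ≤ x i := fun i => by
    simpa using add_le_add (le_refl (x i)) hneg
  refine ⟨fun i => if a i = ⊥ then x i + ((A - B : ℝ) : EReal) else x i, ⟨?_, ?_⟩, ?_⟩
  · intro i
    dsimp only
    split_ifs
    · exact ne_top_of_le_ne_top (hx i) (hle i)
    · exact hx i
  · have h1 : ((A : ℝ) : EReal) ≤
        dotE a (fun i => if a i = ⊥ then x i + ((A - B : ℝ) : EReal) else x i) := by
      rw [← hA]
      refine iSup_le fun i => ?_
      by_cases hi : a i = ⊥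
      · simp [hi]
      · refine le_trans ?_ (le_iSup _ i)
        simp [hi]
    refine le_trans (iSup_le fun i => ?_) h1
    by_cases hi : a i = ⊥
    · have h2 : b i + x i ≤ (B : EReal) := by
        rw [← hB]
        exact le_iSup (fun i => b i + x i) i
      simp only [hi, if_true]
      rw [← add_assoc]
      refine (add_le_add h2 le_rfl).trans ?_
      rw [← EReal.coe_add]
      simp
    · have hbi : b i = ⊥ := by
        by_contra hbi
        exact (Set.eq_empty_iff_forall_notMem.1 hdisj i) ⟨hi, hbi⟩
      simp [hbi]
  · unfold dH
    rw [EReal.neg_le, ← EReal.coe_neg, neg_sub]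
    have h1 : ((A - B : ℝ) : EReal) ≤
        vres x (fun i => if a i = ⊥ then x i + ((A - B : ℝ) : EReal) else x i) := by
      refine le_vres fun i => ?_
      split_ifs
      · exact le_rfl
      · exact hle i
    have h2 : (0 : EReal) ≤
        vres (fun i => if a i = ⊥ then x i + ((A - B : ℝ) : EReal) else x i) x := by
      refine le_vres fun i => ?_
      rw [add_zero]
      split_ifs
      · exact hle i
      · exact le_rfl
    simpa using add_le_add h1 h2

theorem best_approximation_in_halfspace (n : ℕ) (a b : Fin n → EReal)
    (ha : ∀ i, a i ≠ ⊤) (hb : ∀ i, b i ≠ ⊤)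
    (hdisj : rSupp a ∩ rSupp b = ∅) (hbne : rSupp b ≠ ∅)
    (x : Fin n → EReal) (hx : ∀ i, x i ≠ ⊤)
    (hxH : x ∉ {h : Fin n → EReal | (∀ i, h i ≠ ⊤) ∧ dotE b h ≤ dotE a h})
    (hfin : dSet x {h : Fin n → EReal | (∀ i, h i ≠ ⊤) ∧ dotE b h ≤ dotE a h} < ⊤)
    (h : Fin n → EReal) (hh : ∀ i, h i ≠ ⊤) :
    (h ∈ {h : Fin n → EReal | (∀ i, h i ≠ ⊤) ∧ dotE b h ≤ dotE a h} ∧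
      dH x h = dSet x {h : Fin n → EReal | (∀ i, h i ≠ ⊤) ∧ dotE b h ≤ dotE a h}) ↔
    (dotE b h ≤ dotE a h ∧ dotE b h ≠ ⊥ ∧
      ∀ k, x k + dotE a h + (-(dotE b x)) ≤ h k ∧ h k ≤ x k + dotE b h + (-(dotE a x))) := by
  have hlt : dotE a x < dotE b x := by
    by_contra hc
    exact hxH ⟨hx, not_lt.1 hc⟩
  obtain ⟨B, hB⟩ : ∃ B : ℝ, dotE b x = B :=
    ⟨_, (EReal.coe_toReal (dotE_ne_top hb hx) (ne_bot_of_gt hlt)).symm⟩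
  obtain ⟨i₀, hi₀⟩ := exists_ne_bot (ne_bot_of_gt hlt)
  have chain : ∀ g : Fin n → EReal, (∀ i, g i ≠ ⊤) → dH x g ≠ ⊤ →
      ∃ l m : ℝ, vres x g = l ∧ vres g x = m ∧ dotE b x + l ≤ dotE b g ∧
        dotE a g + m ≤ dotE a x := by
    intro g hg hd
    obtain ⟨l, m, hl, hm⟩ := vres_real hx hg hi₀ hd
    refine ⟨l, m, hl, hm, dotE_add_le b l fun i => ?_, dotE_add_le a m fun i => ?_⟩
    · rw [← hl]; exact vres_spec hx i
    · rw [← hm]; exact vres_spec hg i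
  have real_of : ∀ g : Fin n → EReal, (∀ i, g i ≠ ⊤) → dotE b g ≤ dotE a g → dotE b g ≠ ⊥ →
      ∃ C D : ℝ, dotE b g = C ∧ dotE a g = D ∧ C ≤ D := by
    intro g hg hle hbot
    have h1 := EReal.coe_toReal (dotE_ne_top hb hg) hbot
    have h2 := EReal.coe_toReal (dotE_ne_top ha hg) (ne_bot_of_le_ne_bot hbot hle)
    refine ⟨_, _, h1.symm, h2.symm, ?_⟩
    rwa [← h1, ← h2, EReal.coe_le_coe_iff] at hle
  have bot_of : ∀ (g : Fin n → EReal) (l : ℝ), dotE b x + l ≤ dotE b g → dotE b g ≠ ⊥ := by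
    intro g l hl
    rw [hB, ← EReal.coe_add] at hl
    exact ne_bot_of_le_ne_bot (EReal.coe_ne_bot _) hl
  -- A point of the half-space at finite distance from `x` forces `a·x` to be real.
  obtain ⟨A, hA⟩ : ∃ A : ℝ, dotE a x = A := by
    obtain ⟨g, hg⟩ := iInf_lt_iff.1 hfin
    obtain ⟨hgH, hgd⟩ := iInf_lt_iff.1 hg
    obtain ⟨l, m, -, -, h1, h2⟩ := chain g hgH.1 hgd.ne
    obtain ⟨C, D, -, hD, -⟩ := real_of g hgH.1 hgH.2 (bot_of g l h1)
    rw [hD, ← EReal.coe_add] at h2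
    exact ⟨_, (EReal.coe_toReal (dotE_ne_top ha hx)
      (ne_bot_of_le_ne_bot (EReal.coe_ne_bot _) h2)).symm⟩
  have hAB : A < B := by
    rw [hA, hB] at hlt
    exact_mod_cast hlt
  have hdist : dSet x {h : Fin n → EReal | (∀ i, h i ≠ ⊤) ∧ dotE b h ≤ dotE a h}
      = ((B - A : ℝ) : EReal) := by
    apply le_antisymm
    · obtain ⟨g, hgH, hgd⟩ := exists_close_point hdisj hx hA hB hAB
      exact (iInf₂_le g hgH).trans hgd
    · refine le_iInf₂ fun g hgH => ?_
      by_cases hd : dH x g = ⊤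
      · rw [hd]; exact le_top
      · obtain ⟨l, m, hl, hm, h1, h2⟩ := chain g hgH.1 hd
        obtain ⟨C, D, hC, hD, hCD⟩ := real_of g hgH.1 hgH.2 (bot_of g l h1)
        rw [hB, hC] at h1
        rw [hA, hD] at h2
        unfold dH
        rw [hl, hm]
        norm_cast at h1 h2 ⊢
        linarith
  rw [hdist]
  constructor
  · rintro ⟨hhH, hd⟩
    obtain ⟨l, m, hl, hm, h1, h2⟩ := chain h hh (by rw [hd]; exact EReal.coe_ne_top _)
    have hbot := bot_of h l h1
    obtain ⟨C, D, hC, hD, hCD⟩ := real_of h hh hhH.2 hbot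
    refine ⟨hhH.2, hbot, fun k => ?_⟩
    have s1 := vres_spec (y := h) hx k
    have s2 := vres_spec (y := x) hh k
    unfold dH at hd
    rw [hl, hm] at hd
    rw [hl] at s1
    rw [hm] at s2
    rw [hB, hC] at h1
    rw [hA, hD] at h2
    norm_cast at hd h1 h2
    -- Optimality turns `B + l ≤ b·h ≤ a·h ≤ A - m` into equalities.
    have e1 : l = D + -B := by linarith
    have e2 : -m = C + -A := by linarith
    rw [hA, hB, hC, hD, add_assoc, add_assoc, ← EReal.coe_neg, ← EReal.coe_neg, ← EReal.coe_add,
      ← EReal.coe_add, ← e1, ← e2, EReal.coe_neg, ← sub_eq_add_neg,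
      EReal.le_sub_iff_add_le (Or.inl (EReal.coe_ne_bot m)) (Or.inl (EReal.coe_ne_top m))]
    exact ⟨s1, s2⟩
  · rintro ⟨hle, hbot, hk⟩
    obtain ⟨C, D, hC, hD, hCD⟩ := real_of h hh hle hbot
    refine ⟨⟨hh, hle⟩, le_antisymm ?_ (hdist ▸ iInf₂_le h ⟨hh, hle⟩)⟩
    rw [hA, hB, hC, hD] at hk
    have h1 : ((D - B : ℝ) : EReal) ≤ vres x h := by
      refine le_vres fun i => ?_
      rw [EReal.coe_sub, sub_eq_add_neg, ← add_assoc]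
      exact (hk i).1
    have h2 : ((A - C : ℝ) : EReal) ≤ vres h x := by
      refine le_vres fun i => ?_
      rw [← EReal.le_sub_iff_add_le (Or.inl (EReal.coe_ne_bot _)) (Or.inl (EReal.coe_ne_top _)),
        sub_eq_add_neg, ← EReal.coe_neg, neg_sub, EReal.coe_sub, sub_eq_add_neg, ← add_assoc]
      exact (hk i).2
    unfold dH
    rw [EReal.neg_le, ← EReal.coe_neg]
    refine le_trans ?_ (add_le_add h1 h2)
    rw [← EReal.coe_add, EReal.coe_le_coe_iff]
    linarith
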